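/- For a real 2×3 matrix a = (a_{αi}) (rows indexed by α ∈ {1,2}, columns by i ∈ {1,2,3}), define F(a) = 8 det(a aᵀ) − ‖a‖⁴ (Frobenius norm), M = { a : ‖a‖² = 1 and F(a) = 0 }, and the complex-valued functions: ζ(a) = (a₁₁ − a₂₂) + i(a₁₂ + a₂₁); ν(a) = (∂F/∂a₁₁ − ∂F/∂a₂₂) + i(∂F/∂a₁₂ + ∂F/∂a₂₁); β(a) = (aᵀa)₁₁ − (aᵀa)₂₂ + 2i (aᵀa)₁₂; ρ(a) = −2r₁₂ + i(r₁₁ − r₂₂), where r_{jk} = a_{1j} ∂F/∂a_{2k} + a_{1k} ∂F/∂a_{2j} − a_{2j} ∂F/∂a_{1k} − a_{2k} ∂F/∂a_{1j}. Then for every integer p ≥ 0, the family of 2(p+1) functions M → ℂ given by { ζ ρ^i β^j : i + j = p } ∪ { ν ρ^i β^j : i + j = p } is linearly independent over ℂ. -/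

import Mathlib

/-!
On `M` put `X = a₁₁ + i a₁₂`, `Y = a₂₁ + i a₂₂`, `U = X + iY`, `V = X - iY` and
`w = ‖a₁‖² - ‖a₂‖² + 2i ⟨a₁, a₂⟩`, where `a₁, a₂` are the rows. Then `|w|² = 1/2` and
`ζ = U`, `ν = 4U - 8wV`, `β = UV`, `ρ = 8 (w̄ U² - w V²)`.
It suffices to test independence on the curve of matrices with rows `(u, 0, v)` and `(0, n, 0)`,
for which `w = s = 1/√2`, `U = u - n`, `V = u + n` are real (`testPoint`, `test_zeta`, `test_nu`,
`test_beta`, `test_rho`).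

A linear relation becomes `Φ_f ζ + Φ_g ν = 0`, where `Φ_f = ∑ f_{ij} ρ^i β^j` is homogeneous of
degree `p` in `(ρ, β)`. Replacing `u` by `-n²/u` maps `(U, V)` to a multiple of `(-V, U)` and
`(ρ, β)` to the multiple `-(n/u)² (ρ, β)`, so it only rescales `Φ_f` and `Φ_g`. The relations at `u`
and `-n²/u` therefore form a 2×2 linear system in `(Φ_f, Φ_g)` whose determinant is a nonzero
multiple of `U² + V²`, and both `Φ_f` and `Φ_g` vanish at `u`. Since `ρ/β` takes infinitely many
values as `u` varies, a one-variable polynomial argument (`coeff_eq_zero`) shows that all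
coefficients are zero.
-/

open Matrix

/-- The Cartan–Münzner polynomial `F(a) = 8 det(a aᵀ) - ‖a‖⁴` on real 2×3
matrices, represented as elements of `Fin 2 → Fin 3 → ℝ`. -/
noncomputable def FCM (a : Fin 2 → Fin 3 → ℝ) : ℝ :=
  8 * (Matrix.of a * (Matrix.of a)ᵀ).det - (∑ α, ∑ i, a α i ^ 2) ^ 2

/-- The set `M = {a : ‖a‖² = 1, F(a) = 0}`. -/
noncomputable def MSet : Set (Fin 2 → Fin 3 → ℝ) :=
  {a | (∑ α, ∑ i, a α i ^ 2) = 1 ∧ FCM a = 0}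

/-- The partial derivative `∂F/∂a_{αi}`. -/
noncomputable def pdF (α : Fin 2) (i : Fin 3) (a : Fin 2 → Fin 3 → ℝ) : ℝ :=
  fderiv ℝ FCM a (Pi.single α (Pi.single i 1))

/-- `κ(a) = k₁ + i k₂`, where `(k₁,k₂,k₃)` is the cross product of the two
rows of `a`. -/
noncomputable def kappaF (a : Fin 2 → Fin 3 → ℝ) : ℂ :=
  ((a 0 1 * a 1 2 - a 0 2 * a 1 1 : ℝ) : ℂ)
    + Complex.I * ((a 0 2 * a 1 0 - a 0 0 * a 1 2 : ℝ) : ℂ)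

/-- `β(a) = (aᵀa)₁₁ - (aᵀa)₂₂ + 2i (aᵀa)₁₂`. -/
noncomputable def betaF (a : Fin 2 → Fin 3 → ℝ) : ℂ :=
  ((((Matrix.of a)ᵀ * Matrix.of a) 0 0 - ((Matrix.of a)ᵀ * Matrix.of a) 1 1 : ℝ) : ℂ)
    + 2 * Complex.I * ((((Matrix.of a)ᵀ * Matrix.of a) 0 1 : ℝ) : ℂ)

/-- `r_{jk} = a_{1j} ∂F/∂a_{2k} + a_{1k} ∂F/∂a_{2j} - a_{2j} ∂F/∂a_{1k}
- a_{2k} ∂F/∂a_{1j}`. -/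
noncomputable def rF (j k : Fin 3) (a : Fin 2 → Fin 3 → ℝ) : ℝ :=
  a 0 j * pdF 1 k a + a 0 k * pdF 1 j a - a 1 j * pdF 0 k a - a 1 k * pdF 0 j a

/-- `ρ(a) = -2r₁₂ + i(r₁₁ - r₂₂)`. -/
noncomputable def rhoF (a : Fin 2 → Fin 3 → ℝ) : ℂ :=
  ((-2 * rF 0 1 a : ℝ) : ℂ) + Complex.I * ((rF 0 0 a - rF 1 1 a : ℝ) : ℂ)


/-- `ζ(a) = (a₁₁ - a₂₂) + i(a₁₂ + a₂₁)`. -/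
noncomputable def zetaF (a : Fin 2 → Fin 3 → ℝ) : ℂ :=
  ((a 0 0 - a 1 1 : ℝ) : ℂ) + Complex.I * ((a 0 1 + a 1 0 : ℝ) : ℂ)

/-- `ν(a) = (∂F/∂a₁₁ - ∂F/∂a₂₂) + i(∂F/∂a₁₂ + ∂F/∂a₂₁)`. -/
noncomputable def nuF (a : Fin 2 → Fin 3 → ℝ) : ℂ :=
  ((pdF 0 0 a - pdF 1 1 a : ℝ) : ℂ) + Complex.I * ((pdF 0 1 a + pdF 1 0 a : ℝ) : ℂ)

/-- The 2×3 matrix with rows `(u, 0, v)` and `(0, n, 0)`. -/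
def testPoint (u v n : ℝ) : Fin 2 → Fin 3 → ℝ := ![![u, 0, v], ![0, n, 0]]

lemma FCM_explicit (a : Fin 2 → Fin 3 → ℝ) :
    FCM a = 8 * ((a 0 0 ^ 2 + a 0 1 ^ 2 + a 0 2 ^ 2) * (a 1 0 ^ 2 + a 1 1 ^ 2 + a 1 2 ^ 2)
      - (a 0 0 * a 1 0 + a 0 1 * a 1 1 + a 0 2 * a 1 2) ^ 2)
      - (a 0 0 ^ 2 + a 0 1 ^ 2 + a 0 2 ^ 2 + (a 1 0 ^ 2 + a 1 1 ^ 2 + a 1 2 ^ 2)) ^ 2 := by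
  simp only [FCM, Matrix.det_fin_two, Matrix.mul_apply, Matrix.transpose_apply, Matrix.of_apply,
    Fin.sum_univ_two, Fin.sum_univ_three]
  ring

lemma FCM_differentiable : Differentiable ℝ FCM := by
  rw [funext FCM_explicit]
  fun_prop

/-- A partial derivative of `F` is the linear coefficient of `F` along the coordinate line. -/
lemma pdF_eq_of_line (α : Fin 2) (i : Fin 3) (a : Fin 2 → Fin 3 → ℝ) (c₀ c₁ c₂ c₃ c₄ : ℝ)
    (h : ∀ t : ℝ, FCM (a + t • (Pi.single α (Pi.single i 1) : Fin 2 → Fin 3 → ℝ))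
      = c₀ + c₁ * t + c₂ * t ^ 2 + c₃ * t ^ 3 + c₄ * t ^ 4) :
    pdF α i a = c₁ := by
  rw [pdF, ← (FCM_differentiable a).lineDeriv_eq_fderiv, lineDeriv, funext h]
  have hd (c : ℝ) (k : ℕ) : HasDerivAt (fun t : ℝ => c * t ^ k) (c * (k * 0 ^ (k - 1))) 0 :=
    (hasDerivAt_pow k (0 : ℝ)).const_mul c
  have hd1 : HasDerivAt (fun t : ℝ => c₀ + c₁ * t) c₁ 0 := by
    simpa using ((hasDerivAt_id (0 : ℝ)).const_mul c₁).const_add c₀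
  have := ((hd1.add (hd c₂ 2)).add (hd c₃ 3)).add (hd c₄ 4)
  refine this.deriv.trans ?_
  norm_num

lemma pdF_test_00 (u v n : ℝ) : pdF 0 0 (testPoint u v n)
    = 16 * n ^ 2 * u - 4 * (u ^ 2 + v ^ 2 + n ^ 2) * u := by
  apply pdF_eq_of_line 0 0 _ (8 * (u ^ 2 + v ^ 2) * n ^ 2 - (u ^ 2 + v ^ 2 + n ^ 2) ^ 2) _
    (8 * n ^ 2 - 4 * u ^ 2 - 2 * (u ^ 2 + v ^ 2 + n ^ 2)) (-4 * u) (-1)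
  intro t
  simp only [FCM_explicit, Pi.add_apply, Pi.smul_apply]
  simp [testPoint]
  ring

lemma pdF_test_11 (u v n : ℝ) : pdF 1 1 (testPoint u v n)
    = 16 * (u ^ 2 + v ^ 2) * n - 4 * (u ^ 2 + v ^ 2 + n ^ 2) * n := by
  apply pdF_eq_of_line 1 1 _ (8 * (u ^ 2 + v ^ 2) * n ^ 2 - (u ^ 2 + v ^ 2 + n ^ 2) ^ 2) _
    (8 * (u ^ 2 + v ^ 2) - 4 * n ^ 2 - 2 * (u ^ 2 + v ^ 2 + n ^ 2)) (-4 * n) (-1)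
  intro t
  simp only [FCM_explicit, Pi.add_apply, Pi.smul_apply]
  simp [testPoint]
  ring

lemma pdF_test_01 (u v n : ℝ) : pdF 0 1 (testPoint u v n) = 0 := by
  apply pdF_eq_of_line 0 1 _ (8 * (u ^ 2 + v ^ 2) * n ^ 2 - (u ^ 2 + v ^ 2 + n ^ 2) ^ 2) _
    (- 2 * (u ^ 2 + v ^ 2 + n ^ 2)) 0 (-1)
  intro t
  simp only [FCM_explicit, Pi.add_apply, Pi.smul_apply]
  simp [testPoint]
  ring

lemma pdF_test_10 (u v n : ℝ) : pdF 1 0 (testPoint u v n) = 0 := by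
  apply pdF_eq_of_line 1 0 _ (8 * (u ^ 2 + v ^ 2) * n ^ 2 - (u ^ 2 + v ^ 2 + n ^ 2) ^ 2) _
    (8 * v ^ 2 - 2 * (u ^ 2 + v ^ 2 + n ^ 2)) 0 (-1)
  intro t
  simp only [FCM_explicit, Pi.add_apply, Pi.smul_apply]
  simp [testPoint]
  ring

section TestCurve

variable {s n u v : ℝ}

lemma test_mem (hs : s ^ 2 = 1 / 2) (hn : n ^ 2 = (1 - s) / 2)
    (huv : u ^ 2 + v ^ 2 = (1 + s) / 2) : testPoint u v n ∈ MSet := by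
  constructor
  · simp [testPoint, Fin.sum_univ_two, Fin.sum_univ_three]
    linarith
  · have : FCM (testPoint u v n) = 8 * (u ^ 2 + v ^ 2) * n ^ 2 - (u ^ 2 + v ^ 2 + n ^ 2) ^ 2 := by
      simp [FCM_explicit, testPoint]
      ring
    rw [this, huv, hn]
    linear_combination (-2) * hs

lemma test_zeta : zetaF (testPoint u v n) = ((u - n : ℝ) : ℂ) := by
  simp [zetaF, testPoint]

lemma test_beta : betaF (testPoint u v n) = ((u ^ 2 - n ^ 2 : ℝ) : ℂ) := by
  simp [betaF, testPoint, Matrix.mul_apply, Fin.sum_univ_two]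
  ring

lemma test_nu (hn : n ^ 2 = (1 - s) / 2) (huv : u ^ 2 + v ^ 2 = (1 + s) / 2) :
    nuF (testPoint u v n) = ((4 * (u - n) - 8 * s * (u + n) : ℝ) : ℂ) := by
  rw [nuF, pdF_test_00, pdF_test_01, pdF_test_10, pdF_test_11, huv, hn]
  push_cast
  ring

lemma test_rho (hn : n ^ 2 = (1 - s) / 2) (huv : u ^ 2 + v ^ 2 = (1 + s) / 2) :
    rhoF (testPoint u v n) = ((-32 * s * u * n : ℝ) : ℂ) := by
  simp only [rhoF, rF, pdF_test_00, pdF_test_01, pdF_test_10, pdF_test_11, huv, hn]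
  simp [testPoint]
  ring

end TestCurve

/-- The index set `{(i, j) : i + j = p}` is finite, being the antidiagonal of `p`. -/
instance expFintype (p : ℕ) : Fintype {ij : ℕ × ℕ // ij.1 + ij.2 = p} :=
  Fintype.subtype (Finset.HasAntidiagonal.antidiagonal p) (fun _ => Finset.HasAntidiagonal.mem_antidiagonal)

/-- The binary form `∑_{i+j=p} f_{ij} x^i y^j`. -/
noncomputable def binForm {p : ℕ} (f : {ij : ℕ × ℕ // ij.1 + ij.2 = p} → ℂ) (x y : ℂ) : ℂ :=
  ∑ ij, f ij * (x ^ ij.1.1 * y ^ ij.1.2)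

lemma binForm_smul {p : ℕ} (f : {ij : ℕ × ℕ // ij.1 + ij.2 = p} → ℂ) (c x y : ℂ) :
    binForm f (c * x) (c * y) = c ^ p * binForm f x y := by
  rw [binForm, binForm, Finset.mul_sum]
  refine Finset.sum_congr rfl fun ij _ => ?_
  have : c ^ p = c ^ ij.1.1 * c ^ ij.1.2 := by rw [← pow_add, ij.2]
  rw [this]
  ring

/-- A binary form with infinitely many zeros `(x : 1)` is zero. -/
lemma coeff_eq_zero {p : ℕ} (f : {ij : ℕ × ℕ // ij.1 + ij.2 = p} → ℂ) (S : Set ℂ)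
    (hS : S.Infinite) (h : ∀ x ∈ S, binForm f x 1 = 0) : f = 0 := by
  let P : Polynomial ℂ := ∑ ij, Polynomial.monomial ij.1.1 (f ij)
  have hP : P = 0 := by
    refine Polynomial.eq_zero_of_infinite_isRoot P (hS.mono fun x hx => ?_)
    have := h x hx
    simpa [P, Polynomial.IsRoot, Polynomial.eval_finsetSum, binForm] using this
  funext kl
  have hc : P.coeff kl.1.1 = f kl := by
    simp only [P, Polynomial.finsetSum_coeff, Polynomial.coeff_monomial]
    rw [Finset.sum_eq_single kl]
    · simp
    · intro ij _ hne
      refine if_neg fun h1 => hne (Subtype.ext (Prod.ext h1 ?_))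
      have := ij.2
      have := kl.2
      omega
    · simp
  rw [← hc, hP]
  simp

/-- The two relations at `u` and at `-n²/u` force both forms to vanish at `(ρ(u), β(u))`. -/
lemma forms_vanish {p : ℕ} (f g : {ij : ℕ × ℕ // ij.1 + ij.2 = p} → ℂ) {s n u : ℝ}
    (hs : 0 < s) (hn : 0 < n) (hu : 0 < u)
    (h : ∀ u' : ℝ, u' = u ∨ u' = -n ^ 2 / u →
      ((u' - n : ℝ) : ℂ) * binForm f ((-32 * s * u' * n : ℝ) : ℂ) ((u' ^ 2 - n ^ 2 : ℝ) : ℂ)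
      + ((4 * (u' - n) - 8 * s * (u' + n) : ℝ) : ℂ)
        * binForm g ((-32 * s * u' * n : ℝ) : ℂ) ((u' ^ 2 - n ^ 2 : ℝ) : ℂ) = 0) :
    binForm f ((-32 * s * u * n : ℝ) : ℂ) ((u ^ 2 - n ^ 2 : ℝ) : ℂ) = 0 ∧
    binForm g ((-32 * s * u * n : ℝ) : ℂ) ((u ^ 2 - n ^ 2 : ℝ) : ℂ) = 0 := by
  have h1 := h u (Or.inl rfl)
  have h2 := h _ (Or.inr rfl)
  have hρ : ((-32 * s * (-n ^ 2 / u) * n : ℝ) : ℂ)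
      = ((-(n ^ 2 / u ^ 2) : ℝ) : ℂ) * ((-32 * s * u * n : ℝ) : ℂ) := by
    rw [← Complex.ofReal_mul]
    congr 1
    field_simp
  have hβ : (((-n ^ 2 / u) ^ 2 - n ^ 2 : ℝ) : ℂ)
      = ((-(n ^ 2 / u ^ 2) : ℝ) : ℂ) * ((u ^ 2 - n ^ 2 : ℝ) : ℂ) := by
    rw [← Complex.ofReal_mul]
    congr 1
    field_simp
    ring
  rw [hρ, hβ, binForm_smul, binForm_smul] at h2
  set A := binForm f ((-32 * s * u * n : ℝ) : ℂ) ((u ^ 2 - n ^ 2 : ℝ) : ℂ)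
  set B := binForm g ((-32 * s * u * n : ℝ) : ℂ) ((u ^ 2 - n ^ 2 : ℝ) : ℂ)
  have hc : ((-(n ^ 2 / u ^ 2) : ℝ) : ℂ) ^ p ≠ 0 := by
    refine pow_ne_zero _ (Complex.ofReal_ne_zero.2 ?_)
    have : 0 < n ^ 2 / u ^ 2 := by positivity
    linarith
  have hu0 : (u : ℂ) ≠ 0 := Complex.ofReal_ne_zero.2 hu.ne'
  have hn0 : (n : ℂ) ≠ 0 := Complex.ofReal_ne_zero.2 hn.ne'
  have hs0 : (s : ℂ) ≠ 0 := Complex.ofReal_ne_zero.2 hs.ne'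
  have h3 : ((-n ^ 2 / u - n : ℝ) : ℂ) * A
      + ((4 * (-n ^ 2 / u - n) - 8 * s * (-n ^ 2 / u + n) : ℝ) : ℂ) * B = 0 := by
    apply mul_left_cancel₀ hc
    linear_combination h2
  have h4 : -(u + n : ℂ) * (A + 4 * B) - (u - n : ℂ) * (8 * s * B) = 0 := by
    apply mul_left_cancel₀ (div_ne_zero hn0 hu0)
    push_cast at h3
    rw [mul_zero, ← h3]
    field_simp
    ring
  have h5 : (u - n : ℂ) * (A + 4 * B) - (u + n : ℂ) * (8 * s * B) = 0 := by
    push_cast at h1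
    linear_combination h1
  have hD : ((u - n : ℂ) ^ 2 + (u + n : ℂ) ^ 2) ≠ 0 := by
    have : (u - n) ^ 2 + (u + n) ^ 2 ≠ 0 := by positivity
    exact_mod_cast this
  have hB : B = 0 := by
    have : ((u - n : ℂ) ^ 2 + (u + n : ℂ) ^ 2) * (s * B) = 0 := by
      linear_combination (-(u - n : ℂ) * h4 - (u + n : ℂ) * h5) / 8
    simpa [hD, hs0] using this
  have hA : A = 0 := by
    have : ((u - n : ℂ) ^ 2 + (u + n : ℂ) ^ 2) * (A + 4 * B) = 0 := by
      linear_combination (u - n : ℂ) * h5 - (u + n : ℂ) * h4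
    simpa [hD, hB] using this
  exact ⟨hA, hB⟩

/-- A form vanishing at `(ρ(u), β(u))` for `u` in a nonempty interval beyond `n` is zero. -/
lemma form_zero {p : ℕ} (f : {ij : ℕ × ℕ // ij.1 + ij.2 = p} → ℂ) {s n r : ℝ}
    (hs : 0 < s) (hn : 0 < n) (hr : n < r)
    (h : ∀ u ∈ Set.Ioo n r,
      binForm f ((-32 * s * u * n : ℝ) : ℂ) ((u ^ 2 - n ^ 2 : ℝ) : ℂ) = 0) : f = 0 := by
  have hpos {u : ℝ} (hu : u ∈ Set.Ioo n r) : 0 < u ^ 2 - n ^ 2 := by nlinarith [hu.1]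
  let q : ℝ → ℂ := fun u => ((-32 * s * u * n / (u ^ 2 - n ^ 2) : ℝ) : ℂ)
  have hq : Set.InjOn q (Set.Ioo n r) := by
    intro x hx y hy hxy
    have hxy' := Complex.ofReal_injective hxy
    have hx2 := hpos hx
    have hy2 := hpos hy
    rw [div_eq_div_iff hx2.ne' hy2.ne'] at hxy'
    have hx0 : 0 < x := hn.trans hx.1
    have hy0 : 0 < y := hn.trans hy.1
    have : (32 * s * n * (x * y + n ^ 2)) * (x - y) = 0 := by linear_combination hxy'
    have hne : 32 * s * n * (x * y + n ^ 2) ≠ 0 := by positivity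
    exact sub_eq_zero.1 ((mul_eq_zero.1 this).resolve_left hne)
  refine coeff_eq_zero f (q '' Set.Ioo n r) ((Set.Ioo_infinite hr).image hq) ?_
  rintro _ ⟨u, hu, rfl⟩
  have hβ : ((u ^ 2 - n ^ 2 : ℝ) : ℂ) ≠ 0 := Complex.ofReal_ne_zero.2 (hpos hu).ne'
  have h1 := h u hu
  have h2 := binForm_smul f ((u ^ 2 - n ^ 2 : ℝ) : ℂ) (q u) 1
  have h3 : ((u ^ 2 - n ^ 2 : ℝ) : ℂ) * q u = ((-32 * s * u * n : ℝ) : ℂ) := by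
    rw [← Complex.ofReal_mul, mul_div_cancel₀ _ (hpos hu).ne']
  rw [h3, mul_one, h1] at h2
  exact (mul_eq_zero.1 h2.symm).resolve_left (pow_ne_zero _ hβ)

/-- for every `p ≥ 0`, the family of `2(p+1)` functions `M → ℂ`
given by `{ ζ ρ^i β^j : i + j = p } ∪ { ν ρ^i β^j : i + j = p }` is linearly
independent over `ℂ`. -/
theorem stmt16 (p : ℕ) :
    LinearIndependent ℂ
      (fun idx : {ij : ℕ × ℕ // ij.1 + ij.2 = p} ⊕ {ij : ℕ × ℕ // ij.1 + ij.2 = p} =>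
        match idx with
        | .inl ij => fun a : MSet =>
            zetaF a.1 * rhoF a.1 ^ ij.1.1 * betaF a.1 ^ ij.1.2
        | .inr ij => fun a : MSet =>
            nuF a.1 * rhoF a.1 ^ ij.1.1 * betaF a.1 ^ ij.1.2) := by
  rw [Fintype.linearIndependent_iff]
  intro c hc
  let f : {ij : ℕ × ℕ // ij.1 + ij.2 = p} → ℂ := fun ij => c (.inl ij)
  let g : {ij : ℕ × ℕ // ij.1 + ij.2 = p} → ℂ := fun ij => c (.inr ij)
  have hrel (a : MSet) : zetaF a.1 * binForm f (rhoF a.1) (betaF a.1)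
      + nuF a.1 * binForm g (rhoF a.1) (betaF a.1) = 0 := by
    have := congrFun hc a
    rw [Fintype.sum_sum_type] at this
    simp only [Pi.add_apply, Finset.sum_apply, Pi.smul_apply, smul_eq_mul, Pi.zero_apply] at this
    rw [binForm, binForm, Finset.mul_sum, Finset.mul_sum, ← this]
    congr 1 <;> exact Finset.sum_congr rfl fun ij _ => by simp only [f, g]; ring
  -- `s = 1/√2` and `n² = (1 - s)/2`, `r² = (1 + s)/2` are the squared row lengths on the curve.
  obtain ⟨s, hs0, hs⟩ : ∃ s : ℝ, 0 < s ∧ s ^ 2 = 1 / 2 :=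
    ⟨√(1 / 2), by positivity, Real.sq_sqrt (by norm_num)⟩
  have hs1 : s < 1 := by nlinarith
  obtain ⟨n, hn0, hn⟩ : ∃ n : ℝ, 0 < n ∧ n ^ 2 = (1 - s) / 2 :=
    ⟨√((1 - s) / 2), Real.sqrt_pos.2 (by linarith), Real.sq_sqrt (by linarith)⟩
  obtain ⟨r, hr0, hr⟩ : ∃ r : ℝ, 0 < r ∧ r ^ 2 = (1 + s) / 2 :=
    ⟨√((1 + s) / 2), Real.sqrt_pos.2 (by linarith), Real.sq_sqrt (by linarith)⟩
  have hnr : n < r := by nlinarith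
  have hcurve (u : ℝ) (hu : u ^ 2 ≤ r ^ 2) :
      ((u - n : ℝ) : ℂ) * binForm f ((-32 * s * u * n : ℝ) : ℂ) ((u ^ 2 - n ^ 2 : ℝ) : ℂ)
      + ((4 * (u - n) - 8 * s * (u + n) : ℝ) : ℂ)
        * binForm g ((-32 * s * u * n : ℝ) : ℂ) ((u ^ 2 - n ^ 2 : ℝ) : ℂ) = 0 := by
    have huv : u ^ 2 + √(r ^ 2 - u ^ 2) ^ 2 = (1 + s) / 2 := by
      rw [Real.sq_sqrt (by linarith)]
      linarith
    have := hrel ⟨_, test_mem hs hn huv⟩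
    rwa [test_zeta, test_nu hn huv, test_rho hn huv, test_beta] at this
  have hvan (u : ℝ) (hu : u ∈ Set.Ioo n r) := by
    have hu0 : 0 < u := hn0.trans hu.1
    refine forms_vanish f g hs0 hn0 hu0 (fun u' hu' => hcurve u' ?_)
    rcases hu' with rfl | rfl
    · nlinarith [hu.2]
    · -- `(n²/u)² ≤ n² ≤ r²` because `n < u`.
      have h1 : n ^ 2 / u ≤ n := by
        rw [div_le_iff₀ hu0]
        nlinarith [hu.1]
      have h2 : 0 ≤ n ^ 2 / u := by positivity
      rw [neg_div, neg_sq]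
      nlinarith
  have hf : f = 0 := form_zero f hs0 hn0 hnr fun u hu => (hvan u hu).1
  have hg : g = 0 := form_zero g hs0 hn0 hnr fun u hu => (hvan u hu).2
  rintro (ij | ij)
  · exact congrFun hf ij
  · exact congrFun hg ij
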